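/- Let l_1,…,l_k be k distinct block indices, let Φ = [A_{l_1} … A_{l_k}] be the m×kd matrix concatenating the corresponding blocks, and let z ∈ ℝ^{kd} be partitioned into blocks z_1,…,z_k ∈ ℝ^d. Then max_{1≤i≤k} ‖A_{l_i}^T Φ z‖_2 ≥ (1 − (d−1)ν − (k−1)dμ_B) · max_{1≤j≤k} ‖z_j‖_2. -/

import Mathlib

/- Setting: a measurement matrix `A ∈ ℝ^{m×n}` with `n = L·d`, partitioned into `L` column
blocks of size `m×d`; columns are indexed by pairs `(l, j)` (block `l`, position `j`). -/

noncomputable section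

open Finset Matrix

/-- Euclidean (ℓ₂) norm of a finitely indexed real vector. -/
def e2norm {ι : Type*} [Fintype ι] (v : ι → ℝ) : ℝ := Real.sqrt (∑ i, v i ^ 2)

/-- Euclidean inner (dot) product of two real vectors. -/
def dotp {ι : Type*} [Fintype ι] (u v : ι → ℝ) : ℝ := ∑ i, u i * v i

/-- The `(l, j)` column of the block matrix `A` (block `l`, position `j` inside the block). -/
def acol {m L d : ℕ} (A : Matrix (Fin m) (Fin L × Fin d) ℝ) (l : Fin L) (j : Fin d) :
    Fin m → ℝ :=
  fun i => A i (l, j)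

/-- `A_lᵀ v` : correlation of the `l`-th block of `A` with a vector `v ∈ ℝ^m`. -/
def blkT {m L d : ℕ} (A : Matrix (Fin m) (Fin L × Fin d) ℝ) (l : Fin L) (v : Fin m → ℝ) :
    Fin d → ℝ :=
  fun j => dotp (acol A l j) v

/-- Spectral norm (largest singular value) `ρ(X)` of a real matrix, as the supremum of
`‖Xu‖₂ / ‖u‖₂` over nonzero `u`. -/
def specNorm {p q : ℕ} (X : Matrix (Fin p) (Fin q) ℝ) : ℝ :=
  ⨆ u : {u : Fin q → ℝ // u ≠ 0}, e2norm (X *ᵥ u.1) / e2norm u.1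

/-- The `d × d` cross-Gram matrix `A_iᵀ A_j` of two blocks of `A`. -/
def bgram {m L d : ℕ} (A : Matrix (Fin m) (Fin L × Fin d) ℝ) (i j : Fin L) :
    Matrix (Fin d) (Fin d) ℝ :=
  fun a b => dotp (acol A i a) (acol A j b)

/-- Block-coherence `μ_B = max_{i ≠ j} (1/d) ρ(A_iᵀ A_j)`. -/
def blockCoh {m L d : ℕ} (A : Matrix (Fin m) (Fin L × Fin d) ℝ) : ℝ :=
  ⨆ p : {p : Fin L × Fin L // p.1 ≠ p.2},
    (1 / (d : ℝ)) * specNorm (bgram A p.1.1 p.1.2)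

/-- Sub-coherence `ν`: the maximum of `|a_iᵀ a_j|` over pairs of distinct columns lying in the
same block of `A`. -/
def subCoh {m L d : ℕ} (A : Matrix (Fin m) (Fin L × Fin d) ℝ) : ℝ :=
  ⨆ t : {t : Fin L × Fin d × Fin d // t.2.1 ≠ t.2.2},
    |dotp (acol A t.1.1 t.1.2.1) (acol A t.1.1 t.1.2.2)|

lemma e2norm_eq_norm {ι : Type*} [Fintype ι] (v : ι → ℝ) :
    e2norm v = ‖(WithLp.toLp 2 v : EuclideanSpace ℝ ι)‖ := by
  rw [EuclideanSpace.norm_eq]; simp [e2norm]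

lemma e2norm_nonneg {ι : Type*} [Fintype ι] (v : ι → ℝ) : 0 ≤ e2norm v := Real.sqrt_nonneg _

lemma e2norm_sq {ι : Type*} [Fintype ι] (v : ι → ℝ) : e2norm v ^ 2 = ∑ i, v i ^ 2 :=
  Real.sq_sqrt (Finset.sum_nonneg fun _ _ => sq_nonneg _)

lemma e2norm_add_le {ι : Type*} [Fintype ι] (u v : ι → ℝ) :
    e2norm (u + v) ≤ e2norm u + e2norm v := by
  simp only [e2norm_eq_norm, WithLp.toLp_add]; exact norm_add_le _ _

lemma e2norm_neg {ι : Type*} [Fintype ι] (u : ι → ℝ) : e2norm (-u) = e2norm u := by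
  simp [e2norm]

lemma e2norm_sum_le {ι κ : Type*} [Fintype ι] (s : Finset κ) (f : κ → ι → ℝ) :
    e2norm (∑ j ∈ s, f j) ≤ ∑ j ∈ s, e2norm (f j) := by
  simp only [e2norm_eq_norm, WithLp.toLp_sum]; exact norm_sum_le _ _

lemma dot_le {ι : Type*} [Fintype ι] (u v : ι → ℝ) :
    ∑ i, u i * v i ≤ e2norm u * e2norm v := Real.sum_mul_le_sqrt_mul_sqrt _ _ _

lemma e2norm_pos {ι : Type*} [Fintype ι] {u : ι → ℝ} (h : u ≠ 0) : 0 < e2norm u := by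
  rw [e2norm_eq_norm, norm_pos_iff]
  intro h'
  exact h (by simpa using h')

lemma e2norm_mulVec_le {p q : ℕ} (X : Matrix (Fin p) (Fin q) ℝ) (u : Fin q → ℝ) :
    e2norm (X *ᵥ u) ≤ specNorm X * e2norm u := by
  by_cases hu : u = 0
  · subst hu; simp [e2norm]
  have hb : BddAbove (Set.range fun u : {u : Fin q → ℝ // u ≠ 0} =>
      e2norm (X *ᵥ u.1) / e2norm u.1) := by
    refine ⟨e2norm (fun i => e2norm (X i)), ?_⟩
    rintro _ ⟨⟨v, hv⟩, rfl⟩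
    have hv' := e2norm_pos hv
    simp only
    rw [div_le_iff₀ hv']
    apply Real.sqrt_le_iff.2
    refine ⟨mul_nonneg (e2norm_nonneg _) (e2norm_nonneg _), ?_⟩
    rw [mul_pow, e2norm_sq, Finset.sum_mul]
    refine Finset.sum_le_sum fun i _ => ?_
    rw [e2norm_sq, e2norm_sq]
    exact Finset.sum_mul_sq_le_sq_mul_sq Finset.univ (X i) v
  have := le_ciSup hb ⟨u, hu⟩
  rwa [div_le_iff₀ (e2norm_pos hu)] at this

lemma gram_lower {d : ℕ} (G : Matrix (Fin d) (Fin d) ℝ) (ν : ℝ)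
    (h1 : ∀ a, G a a = 1) (h2 : ∀ a b, a ≠ b → |G a b| ≤ ν) (u : Fin d → ℝ) :
    (1 - ((d : ℝ) - 1) * ν) * e2norm u ≤ e2norm (G *ᵥ u) := by
  by_cases hu : u = 0
  · subst hu; simp [e2norm]
  have hp := e2norm_pos hu
  have key : ∀ a b, (if a = b then (1 + ν) * u a ^ 2 else 0) - ν * ((u a ^ 2 + u b ^ 2) / 2)
      ≤ u a * (G a b * u b) := by
    intro a b
    split_ifs with h
    · subst h; rw [h1]; nlinarith
    · have h3 := abs_le.1 (h2 a b h)
      nlinarith [mul_nonneg (by linarith : 0 ≤ ν + G a b) (sq_nonneg (u a + u b)),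
        mul_nonneg (by linarith : 0 ≤ ν - G a b) (sq_nonneg (u a - u b))]
  have h := Finset.sum_le_sum fun a (_ : a ∈ Finset.univ) =>
    Finset.sum_le_sum fun b (_ : b ∈ Finset.univ) => key a b
  have e1 : ∑ a, ∑ b, ((if a = b then (1 + ν) * u a ^ 2 else 0)
      - ν * ((u a ^ 2 + u b ^ 2) / 2)) = (1 - ((d : ℝ) - 1) * ν) * e2norm u ^ 2 := by
    rw [e2norm_sq]
    simp only [Finset.sum_sub_distrib, Finset.sum_ite_eq, Finset.mem_univ, if_true,
      ← Finset.mul_sum, ← Finset.sum_div, Finset.sum_add_distrib, Finset.sum_const,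
      Finset.card_univ, Fintype.card_fin, nsmul_eq_mul]
    ring
  have e2 : ∑ a, ∑ b, u a * (G a b * u b) = ∑ a, u a * (G *ᵥ u) a := by
    simp only [← Finset.mul_sum]; rfl
  rw [e1, e2] at h
  have h5 := h.trans (dot_le _ _)
  nlinarith

/-- **Eq. (33) of the paper.**  For distinct block indices `l_1, …, l_k`,
`Φ = [A_{l_1} … A_{l_k}]` and a block-partitioned `z`,
`max_{1 ≤ i ≤ k} ‖A_{l_i}ᵀ Φ z‖₂ ≥ (1 - (d-1)ν - (k-1)dμ_B) · max_{1 ≤ j ≤ k} ‖z_j‖₂`. -/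
theorem stmt11 {m L d k : ℕ}
    (hm : m < L * d) (hd : 0 < d) (hk : 0 < k)
    (A : Matrix (Fin m) (Fin L × Fin d) ℝ)
    (hA : ∀ l j, e2norm (acol A l j) = 1)
    (μB ν : ℝ) (hμB : μB = blockCoh A) (hν : ν = subCoh A)
    (l : Fin k → Fin L) (hl : Function.Injective l)
    (z : Fin k → Fin d → ℝ)
    (Phiz : Fin m → ℝ)
    (hPhiz : Phiz = fun i => ∑ j, ∑ a, A i (l j, a) * z j a) :
    (1 - ((d : ℝ) - 1) * ν - ((k : ℝ) - 1) * d * μB) * (⨆ j : Fin k, e2norm (z j)) ≤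
      ⨆ i : Fin k, e2norm (blkT A (l i) Phiz) := by
  have : Nonempty (Fin k) := ⟨⟨0, hk⟩⟩
  obtain ⟨j₀, hj₀⟩ := exists_eq_ciSup_of_finite (f := fun j : Fin k => e2norm (z j))
  have hmax : ∀ j, e2norm (z j) ≤ e2norm (z j₀) := fun j => by
    have := le_ciSup (Set.finite_range fun j : Fin k => e2norm (z j)).bddAbove j
    simpa only [hj₀] using this
  rw [← hj₀]
  refine le_trans ?_ (le_ciSup (Set.finite_range
    fun i : Fin k => e2norm (blkT A (l i) Phiz)).bddAbove j₀)
  have hd' : (0 : ℝ) < d := by exact_mod_cast hd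
  have hdecomp : blkT A (l j₀) Phiz = ∑ j, bgram A (l j₀) (l j) *ᵥ z j := by
    subst hPhiz
    ext a
    simp only [blkT, dotp, bgram, Finset.sum_apply, Matrix.mulVec, dotProduct, acol,
      Finset.mul_sum, Finset.sum_mul]
    rw [Finset.sum_comm]
    refine Finset.sum_congr rfl fun j _ => ?_
    rw [Finset.sum_comm]
    refine Finset.sum_congr rfl fun b _ => Finset.sum_congr rfl fun i _ => ?_
    ring
  have hdiag : (1 - ((d : ℝ) - 1) * ν) * e2norm (z j₀) ≤
      e2norm (bgram A (l j₀) (l j₀) *ᵥ z j₀) := by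
    apply gram_lower
    · intro a
      have h := e2norm_sq (acol A (l j₀) a)
      rw [hA] at h
      simp only [bgram, dotp, ← sq]
      linarith
    · intro a b hab
      rw [hν]
      exact le_ciSup (f := fun t : {t : Fin L × Fin d × Fin d // t.2.1 ≠ t.2.2} =>
        |dotp (acol A t.1.1 t.1.2.1) (acol A t.1.1 t.1.2.2)|)
        (Set.finite_range _).bddAbove ⟨(l j₀, a, b), hab⟩
  have hoff : ∀ j ∈ Finset.univ.erase j₀, e2norm (bgram A (l j₀) (l j) *ᵥ z j) ≤
      d * μB * e2norm (z j₀) := by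
    intro j hj
    have hne : l j₀ ≠ l j := fun h => (Finset.mem_erase.1 hj).1 (hl h).symm
    have h1 : (1 / (d : ℝ)) * specNorm (bgram A (l j₀) (l j)) ≤ μB := by
      rw [hμB]
      exact le_ciSup (f := fun p : {p : Fin L × Fin L // p.1 ≠ p.2} =>
        (1 / (d : ℝ)) * specNorm (bgram A p.1.1 p.1.2))
        (Set.finite_range _).bddAbove ⟨(l j₀, l j), hne⟩
    have h0 : 0 ≤ specNorm (bgram A (l j₀) (l j)) :=
      Real.iSup_nonneg fun u => div_nonneg (e2norm_nonneg _) (e2norm_nonneg _)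
    have h2 : specNorm (bgram A (l j₀) (l j)) ≤ d * μB := by
      rw [one_div, inv_mul_le_iff₀ hd'] at h1
      exact h1
    exact (e2norm_mulVec_le _ _).trans
      (mul_le_mul h2 (hmax j) (e2norm_nonneg _) (h0.trans h2))
  have hsum := (e2norm_sum_le (Finset.univ.erase j₀)
    (fun j => bgram A (l j₀) (l j) *ᵥ z j)).trans (Finset.sum_le_sum hoff)
  rw [Finset.sum_const, Finset.card_erase_of_mem (Finset.mem_univ _), Finset.card_univ,
    Fintype.card_fin, nsmul_eq_mul, Nat.cast_sub hk, Nat.cast_one] at hsum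
  have hsplit : bgram A (l j₀) (l j₀) *ᵥ z j₀ = blkT A (l j₀) Phiz +
      -(∑ j ∈ Finset.univ.erase j₀, bgram A (l j₀) (l j) *ᵥ z j) := by
    rw [hdecomp, ← Finset.add_sum_erase _ _ (Finset.mem_univ j₀)]
    abel
  have htri := e2norm_add_le (blkT A (l j₀) Phiz)
    (-(∑ j ∈ Finset.univ.erase j₀, bgram A (l j₀) (l j) *ᵥ z j))
  rw [← hsplit, e2norm_neg] at htri
  linarith
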